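/- Let (R,m) be a Cohen–Macaulay local ring of dimension d and let E be a finitely generated torsion-free R-module of rank e ≥ 1, of projective dimension one, minimally generated by μ(E) = d+e elements, satisfying the condition G_d. Let 0 → R^d →φ R^{d+e} → E → 0 be a minimal free resolution, B = R[y_1,…,y_{d+e}], and L = (ℓ_1,…,ℓ_d) where [ℓ_1 … ℓ_d] = [y_1 … y_{d+e}]·φ, so that S(E) ≅ B/L. Then dim S(E) = d+e and the ideal L is generated by the B-regular sequence ℓ_1,…,ℓ_d. -/

import Mathlib

/-!
STATEMENT 5: Let `(R,m)` be a Cohen–Macaulay (Noetherian) local ring of dimension `d`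
and `E` a finitely generated torsion-free `R`-module of rank `e ≥ 1`, of projective
dimension one, minimally generated by `μ(E) = d+e` elements, satisfying `G_d`.  If
`0 → R^d →φ R^{d+e} → E → 0` is a minimal free resolution, `B = R[y_1,…,y_{d+e}]` and
`L = (ℓ_1,…,ℓ_d)` with `[ℓ_1 … ℓ_d] = [y_1 … y_{d+e}]·φ` (so `S(E) ≅ B/L`), then
`dim S(E) = d+e` and `ℓ_1,…,ℓ_d` is a `B`-regular sequence.
-/

open MvPolynomial

noncomputable section

namespace Stmt5

/-
Let `M = (m, y)`. A prime `Q ⊇ L` of `B` over `p` has `ht Q ≥ ht p + rank φ(κ(p))`, since the `ℓ_i`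
span a space of `rank φ(κ(p))` linear forms over the residue field `κ(p)`. If `ht p = 0`, then `p`
is associated to `R` and the injectivity of `φ` gives `rank φ(κ(p)) = d`; if `0 < ht p < d`, then
`rank φ(κ(p)) = d + e - μ(E_p) ≥ d + 1 - ht p` by `G_d`. In all cases `ht Q ≥ d`, so `ht L ≥ d` and
`dim B/L ≤ d + e`, while `ht M = 2d + e` and the `d` generators of `L ⊆ M` give the reverse bound.
The local ring `B_M` is Cohen–Macaulay of dimension `2d + e`, and its quotient by the `d` elements
`ℓ_i` has dimension at most `d + e`, so they form a regular sequence in `B_M`. As they are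
homogeneous and an element of `B` outside `M` has a unit as constant term, regularity descends
to `B`.
-/

open IsLocalRing RingTheory.Sequence

universe u v

section Depth

open CategoryTheory
open scoped Pointwise

variable {A : Type u} [CommRing A] {M : Type v} [AddCommGroup M] [Module A M]

theorem notMem_of_mem_associatedPrimes [IsNoetherianRing A] {x : A} (hreg : IsSMulRegular M x)
    {P : Ideal A} (hP : P ∈ associatedPrimes A M) : x ∉ P := fun hx ↦
  (biUnion_associatedPrimes_eq_compl_regular A M).le (Set.mem_biUnion hP hx) hreg

theorem ringKrullDim_quotient_le_supportDim [Module.Finite A M] {P : Ideal A}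
    (hP : Module.annihilator A M ≤ P) : ringKrullDim (A ⧸ P) ≤ Module.supportDim A M := by
  rw [Module.supportDim_eq_ringKrullDim_quotient_annihilator]
  exact ringKrullDim_le_of_surjective _ (Ideal.Quotient.factor_surjective hP)

theorem annihilator_quotSMulTop_le [Module.Finite A M] {P : Ideal A} [P.IsPrime]
    (hP : Module.annihilator A M ≤ P) {x : A} (hx : x ∈ P) :
    Module.annihilator A (QuotSMulTop x M) ≤ P := by
  let p : PrimeSpectrum A := ⟨P, inferInstance⟩
  refine Module.mem_support_iff_of_finite (p := p).mp ?_
  rw [Module.support_quotSMulTop]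
  exact ⟨Module.mem_support_iff_of_finite.mpr hP, by simpa [p]⟩

/-- `depth_A M ≥ n`: the maximal ideal contains an `M`-regular sequence of length exactly `n`. The
depth itself is avoided, as the library has no invariant for it. -/
def DepthAtLeast (A : Type*) [CommRing A] [IsLocalRing A] (M : Type*) [AddCommGroup M] [Module A M]
    (n : ℕ) : Prop :=
  ∃ rs : List A, rs.length = n ∧ (∀ r ∈ rs, r ∈ maximalIdeal A) ∧ IsRegular M rs

variable [IsLocalRing A]

theorem maximalIdeal_smul_top_lt_top [Module.Finite A M] [Nontrivial M] :
    maximalIdeal A • (⊤ : Submodule A M) < ⊤ :=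
  (Submodule.top_ne_ideal_smul_of_le_jacobson_annihilator (maximalIdeal_le_jacobson _)).symm.lt_top

variable [IsNoetherianRing A]

theorem DepthAtLeast.le_ringKrullDim {n : ℕ} (h : DepthAtLeast A A n) : n ≤ ringKrullDim A := by
  obtain ⟨rs, rfl, -, hrs⟩ := h
  have : Nontrivial (A ⧸ Ideal.ofList rs) := by
    refine Ideal.Quotient.nontrivial_iff.mpr fun h ↦ hrs.top_ne_smul ?_
    rw [h, smul_eq_mul, Ideal.mul_top]
  rw [← ringKrullDim_add_length_eq_ringKrullDim_of_isRegular rs hrs]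
  exact le_add_of_nonneg_left ringKrullDim_nonneg_of_nontrivial

variable [Module.Finite A M]

theorem DepthAtLeast.quotSMulTop [Small.{v} A] {n : ℕ} (h : DepthAtLeast A M (n + 1)) {x : A}
    (hx : x ∈ maximalIdeal A) (hreg : IsSMulRegular M x) : DepthAtLeast A (QuotSMulTop x M) n := by
  have : Nontrivial M := let ⟨_, _, _, hrs⟩ := h; hrs.nontrivial
  have := nontrivial_quotSMulTop_of_mem_maximalIdeal M hx
  have hM := (ModuleCat.exists_isRegular_tfae (maximalIdeal A) (n + 1) (.of A M)
    maximalIdeal_smul_top_lt_top).out 3 1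
  have hQ := (ModuleCat.exists_isRegular_tfae (maximalIdeal A) n (.of A (QuotSMulTop x M))
    maximalIdeal_smul_top_lt_top).out 1 3
  refine hQ.mp fun i hi ↦ ?_
  have hext := hM.mp h
  exact AddCommGrpCat.subsingleton_of_isZero <| ShortComplex.Exact.isZero_of_both_zeros
    (Abelian.Ext.covariant_sequence_exact₃' _
      (IsSMulRegular.smulShortComplex_shortExact (M := .of A M) hreg) i (i + 1) rfl)
    ((AddCommGrpCat.isZero_of_iff_subsingleton.mpr (hext i (by lia))).eq_zero_of_src _)
    ((AddCommGrpCat.isZero_of_iff_subsingleton.mpr (hext (i + 1) (by lia))).eq_zero_of_tgt _)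

theorem exists_associatedPrimes_quotSMulTop {x : A} (hx : x ∈ maximalIdeal A)
    (hreg : IsSMulRegular M x) {P : Ideal A} (hP : P ∈ associatedPrimes A M) :
    ∃ Q ∈ associatedPrimes A (QuotSMulTop x M), P ≤ Q ∧ x ∈ Q := by
  obtain ⟨hPprime, y, hy⟩ := isAssociatedPrime_iff.mp hP
  let N := Submodule.torsionBySet A M P
  have hyN : y ∈ N := (Submodule.mem_torsionBySet_iff _ _).mpr fun a ↦ by
    simpa using Submodule.mem_colon_singleton.mp (hy.le a.2)
  have hy0 : y ≠ 0 := by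
    rintro rfl
    exact hPprime.ne_top (hy.trans (by simp))
  obtain ⟨u, huN, hu⟩ : ∃ u ∈ N, u ∉ x • (⊤ : Submodule A M) := by
    by_contra! hN
    -- Then `N = x N`, as `x` is regular on `M`, which contradicts Nakayama's lemma.
    have hle : N ≤ Ideal.span {x} • N := by
      intro u hu
      obtain ⟨v, -, rfl⟩ := hN u hu
      refine Submodule.smul_mem_smul (Ideal.mem_span_singleton_self x) ?_
      refine (Submodule.mem_torsionBySet_iff _ _).mpr fun a ↦ hreg ?_
      have hav := (Submodule.mem_torsionBySet_iff _ _).mp hu a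
      exact ((smul_comm x (a : A) v).trans hav).trans (smul_zero x).symm
    have hbot := Submodule.eq_bot_of_le_smul_of_le_jacobson_bot _ N (IsNoetherian.noetherian N) hle
      (((Ideal.span_singleton_le_iff_mem _).mpr hx).trans (maximalIdeal_le_jacobson ⊥))
    exact hy0 ((Submodule.mem_bot A).mp (hbot ▸ hyN))
  obtain ⟨Q, hQ, hle⟩ := exists_le_isAssociatedPrime_of_isNoetherianRing A
    (Submodule.mkQ (x • (⊤ : Submodule A M)) u) (by simpa using hu)
  refine ⟨Q, hQ, fun a ha ↦ hle ?_, hle ?_⟩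
  · rw [Submodule.mem_colon_singleton, Submodule.mem_bot, ← map_smul,
      (Submodule.mem_torsionBySet_iff _ _).mp huN ⟨a, ha⟩, map_zero]
  · rw [Submodule.mem_colon_singleton, Submodule.mem_bot, ← map_smul, Submodule.mkQ_apply,
      Submodule.Quotient.mk_eq_zero]
    exact Submodule.smul_mem_pointwise_smul u x ⊤ trivial

theorem length_le_ringKrullDim_quotient {rs : List A} (hrs : IsRegular M rs)
    (hmem : ∀ r ∈ rs, r ∈ maximalIdeal A) {P : Ideal A} (hP : P ∈ associatedPrimes A M) :
    rs.length ≤ ringKrullDim (A ⧸ P) := by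
  induction rs generalizing M P with
  | nil =>
    have := hP.isPrime
    exact ringKrullDim_nonneg_of_nontrivial
  | cons x rs ih =>
    obtain ⟨hx, hmem⟩ := List.forall_mem_cons.mp hmem
    obtain ⟨hreg, hrs⟩ := (isRegular_cons_iff M x rs).mp hrs
    obtain ⟨Q, hQ, hPQ, hxQ⟩ := exists_associatedPrimes_quotSMulTop hx hreg hP
    have := hP.isPrime
    have hx0 : Ideal.Quotient.mk P x ∈ nonZeroDivisors (A ⧸ P) := mem_nonZeroDivisors_of_ne_zero
      (Ideal.Quotient.eq_zero_iff_mem.not.mpr (notMem_of_mem_associatedPrimes hreg hP))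
    calc ((x :: rs).length : WithBot ℕ∞) = rs.length + 1 := by simp
      _ ≤ ringKrullDim (A ⧸ Q) + 1 := by gcongr; exact ih hrs hmem hQ
      _ ≤ ringKrullDim (A ⧸ P) := ringKrullDim_succ_le_of_surjective (Ideal.Quotient.factor hPQ)
          (Ideal.Quotient.factor_surjective hPQ) hx0 (by simpa [Ideal.Quotient.eq_zero_iff_mem])

theorem supportDim_le_supportDim_quotient_add_length {rs : List A}
    (hmem : ∀ r ∈ rs, r ∈ maximalIdeal A) : Module.supportDim A M ≤
      Module.supportDim A (M ⧸ Ideal.ofList rs • (⊤ : Submodule A M)) + rs.length := by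
  induction rs generalizing M with
  | nil =>
    simpa using
      (Module.supportDim_eq_of_equiv (Submodule.quotEquivOfEqBot (M := M) _ (by simp))).ge
  | cons x rs ih =>
    obtain ⟨hx, hmem⟩ := List.forall_mem_cons.mp hmem
    calc Module.supportDim A M
      _ ≤ Module.supportDim A (QuotSMulTop x M) + 1 :=
        Module.supportDim_le_supportDim_quotSMulTop_succ hx
      _ ≤ Module.supportDim A
            (QuotSMulTop x M ⧸ Ideal.ofList rs • (⊤ : Submodule A (QuotSMulTop x M))) +
          rs.length + 1 := by gcongr; exact ih hmem
      _ = _ := by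
        rw [Module.supportDim_eq_of_equiv
          (Submodule.quotOfListConsSMulTopEquivQuotSMulTopInner M x rs), List.length_cons,
          Nat.cast_succ, add_assoc]

theorem isSMulRegular_of_supportDim_quotSMulTop_le {n : ℕ} (hdepth : DepthAtLeast A M (n + 1))
    {x : A} (hdim : Module.supportDim A (QuotSMulTop x M) ≤ n) : IsSMulRegular M x := by
  by_contra hx
  obtain ⟨P, hP, hxP⟩ := Set.mem_iUnion₂.mp
    ((biUnion_associatedPrimes_eq_compl_regular A M).ge hx)
  obtain ⟨rs, hlen, hmem, hrs⟩ := hdepth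
  have := hP.isPrime
  have hann : Module.annihilator A M ≤ P := Submodule.annihilator_top.ge.trans hP.annihilator_le
  have hlength : (rs.length : WithBot ℕ∞) ≤ n := calc
    (rs.length : WithBot ℕ∞) ≤ ringKrullDim (A ⧸ P) := length_le_ringKrullDim_quotient hrs hmem hP
    _ ≤ Module.supportDim A (QuotSMulTop x M) :=
      ringKrullDim_quotient_le_supportDim (annihilator_quotSMulTop_le hann hxP)
    _ ≤ n := hdim
  exact n.not_succ_le_self (hlen.ge.trans (Nat.cast_le.mp hlength))

theorem isWeaklyRegular_of_supportDim_le [Small.{v} A] {n : ℕ} {rs : List A}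
    (hdepth : DepthAtLeast A M (n + rs.length)) (hmem : ∀ r ∈ rs, r ∈ maximalIdeal A)
    (hdim : Module.supportDim A (M ⧸ Ideal.ofList rs • (⊤ : Submodule A M)) ≤ n) :
    IsWeaklyRegular M rs := by
  induction rs generalizing M with
  | nil => exact .nil A M
  | cons x rs ih =>
    obtain ⟨hx, hmem⟩ := List.forall_mem_cons.mp hmem
    rw [Module.supportDim_eq_of_equiv
      (Submodule.quotOfListConsSMulTopEquivQuotSMulTopInner M x rs)] at hdim
    have hreg : IsSMulRegular M x := by
      refine isSMulRegular_of_supportDim_quotSMulTop_le (n := n + rs.length) hdepth ?_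
      rw [Nat.cast_add]
      exact (supportDim_le_supportDim_quotient_add_length hmem).trans (by gcongr)
    exact .cons hreg (ih (hdepth.quotSMulTop hx hreg) hmem hdim)

end Depth

section Height

theorem height_add_ringKrullDim_quotient_le {S : Type*} [CommRing S] (I : Ideal S) :
    I.height + ringKrullDim (S ⧸ I) ≤ ringKrullDim S := by
  rw [ringKrullDim_quotient]
  rcases isEmpty_or_nonempty (PrimeSpectrum.zeroLocus (I : Set S)) with h | h
  · simp [Order.krullDim_eq_bot]
  have : Nonempty (PrimeSpectrum S) := h.map Subtype.val
  rw [ringKrullDim, Order.krullDim_eq_iSup_coheight_of_nonempty,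
    Order.krullDim_eq_iSup_height_add_coheight_of_nonempty, ← WithBot.coe_add, WithBot.coe_le_coe,
    ENat.add_iSup, iSup_le_iff]
  intro P
  refine le_iSup_of_le P.1 (add_le_add ?_ ?_)
  · rw [← PrimeSpectrum.height_eq_orderHeight]
    exact Ideal.height_mono P.2
  · exact Order.coheight_le_coheight_apply_of_strictMono _ (Subtype.strictMono_coe _) P

theorem ringKrullDim_quotient_le_of_le_height {S : Type*} [CommRing S] {I : Ideal S} {m k : ℕ}
    (hI : k ≤ I.height) (hS : ringKrullDim S ≤ (m + k : ℕ)) : ringKrullDim (S ⧸ I) ≤ m := by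
  have h : (k : WithBot ℕ∞) + ringKrullDim (S ⧸ I) ≤ k + m := calc
    (k : WithBot ℕ∞) + ringKrullDim (S ⧸ I) ≤ I.height + ringKrullDim (S ⧸ I) := by
      gcongr
      exact WithBot.coe_le_coe.mpr hI
    _ ≤ _ := (height_add_ringKrullDim_quotient_le I).trans (by rwa [add_comm, ← Nat.cast_add])
  exact ENat.WithBot.add_le_add_natCast_left_iff.mp h

theorem isWeaklyRegular_of_length_le_height {A : Type*} [CommRing A] [IsLocalRing A]
    [IsNoetherianRing A] {m : ℕ} {rs : List A} (hdepth : DepthAtLeast A A (m + rs.length))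
    (hmem : ∀ r ∈ rs, r ∈ maximalIdeal A) (hdim : ringKrullDim A ≤ (m + rs.length : ℕ))
    (hheight : rs.length ≤ (Ideal.ofList rs).height) : IsWeaklyRegular A rs := by
  refine isWeaklyRegular_of_supportDim_le hdepth hmem ?_
  rw [smul_eq_mul, Ideal.mul_top, Module.supportDim_quotient_eq_ringKrullDim]
  exact ringKrullDim_quotient_le_of_le_height hheight hdim

end Height

theorem isWeaklyRegular_self_iff {S : Type*} [CommRing S] {rs : List S} :
    IsWeaklyRegular S rs ↔ ∀ (i : ℕ) (hi : i < rs.length) (f : S),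
      rs[i] * f ∈ Ideal.ofList (rs.take i) → f ∈ Ideal.ofList (rs.take i) := by
  simp_rw [isWeaklyRegular_iff, isSMulRegular_quotient_iff_mem_of_smul_mem, smul_eq_mul,
    Ideal.mul_top]

section PolynomialRing

variable {R : Type*} [CommRing R]

theorem mem_span_X_image_of_X_mul_mem {σ : Type*} {s : Set σ} {i : σ} (hi : i ∉ s)
    {f : MvPolynomial σ R} (hf : X i * f ∈ Ideal.span (X '' s : Set (MvPolynomial σ R))) :
    f ∈ Ideal.span (X '' s : Set (MvPolynomial σ R)) := by
  rw [mem_ideal_span_X_image] at hf ⊢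
  intro m hm
  obtain ⟨j, hj, hmj⟩ := hf (Finsupp.single i 1 + m) (by simpa [mem_support_iff] using hm)
  have hij : i ≠ j := fun h ↦ hi (h ▸ hj)
  exact ⟨j, hj, by simpa [hij] using hmj⟩

theorem isWeaklyRegular_ofFn_X (n : ℕ) :
    IsWeaklyRegular (MvPolynomial (Fin n) R) (List.ofFn (X : Fin n → MvPolynomial (Fin n) R)) := by
  refine isWeaklyRegular_self_iff.mpr fun i hi f hf ↦ ?_
  have htake : Ideal.ofList ((List.ofFn (X : Fin n → MvPolynomial (Fin n) R)).take i) =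
      Ideal.span (X '' {j : Fin n | (j : ℕ) < i}) := by
    refine congrArg Ideal.span (Set.ext fun f ↦ ?_)
    simp only [List.mem_take_iff_getElem, Set.mem_ofPred_eq, Set.mem_image, List.getElem_ofFn]
    exact ⟨fun ⟨j, hj, hjf⟩ ↦ ⟨⟨j, _⟩, by grind, hjf⟩, fun ⟨j, hj, hjf⟩ ↦ ⟨j, by grind, hjf⟩⟩
  rw [htake, List.getElem_ofFn] at hf
  rw [htake]
  exact mem_span_X_image_of_X_mul_mem (by simp) hf

theorem ker_constantCoeff (σ : Type*) :
    RingHom.ker (constantCoeff (σ := σ) (R := R)) = idealOfVars σ R := by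
  ext f
  rw [← pow_one (idealOfVars σ R), mem_pow_idealOfVars_iff']
  simp [RingHom.mem_ker, constantCoeff_eq, Finsupp.degree_eq_zero_iff]

theorem isWeaklyRegular_ofFn_X_append_map_C (n : ℕ) {rs : List R} (hrs : IsWeaklyRegular R rs) :
    IsWeaklyRegular (MvPolynomial (Fin n) R)
      (List.ofFn (X : Fin n → MvPolynomial (Fin n) R) ++ rs.map C) := by
  let B := MvPolynomial (Fin n) R
  have hvars : (Ideal.ofList (List.ofFn (X : Fin n → B)) • ⊤ : Ideal B) =
      RingHom.ker (constantCoeff (σ := Fin n) (R := R)) := by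
    rw [ker_constantCoeff, smul_eq_mul, Ideal.mul_top]
    exact congrArg Ideal.span (Set.ext fun f ↦ List.mem_ofFn)
  refine (isWeaklyRegular_append_iff B (List.ofFn X) (rs.map C)).mpr
    ⟨isWeaklyRegular_ofFn_X n, ?_⟩
  rw [hvars]
  let e : (B ⧸ RingHom.ker (constantCoeff (σ := Fin n) (R := R))) ≃+* R :=
    RingHom.quotientKerEquivOfSurjective fun r ↦ ⟨C r, constantCoeff_C _ r⟩
  refine (AddEquiv.isWeaklyRegular_congr (e := e.toAddEquiv) ?_).mpr hrs
  refine List.forall₂_map_left_iff.mpr (List.forall₂_same.mpr fun r _ x ↦ ?_)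
  obtain ⟨f, rfl⟩ := Submodule.Quotient.mk_surjective _ x
  exact (map_mul e (Ideal.Quotient.mk _ (C r)) (Ideal.Quotient.mk _ f)).trans
    (congrArg (· * e (Ideal.Quotient.mk _ f)) (constantCoeff_C (Fin n) r))

/-- The maximal ideal `(m, X)` of `R[X]`, where `m` is the maximal ideal of `R`: the polynomials
whose constant term lies in `m`. -/
abbrev originIdeal (R : Type*) [CommRing R] [IsLocalRing R] (σ : Type*) :
    Ideal (MvPolynomial σ R) :=
  (maximalIdeal R).comap constantCoeff

variable [IsLocalRing R]

theorem depthAtLeast_localization_originIdeal (n : ℕ) {d : ℕ} (hR : DepthAtLeast R R d) :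
    DepthAtLeast (Localization.AtPrime (originIdeal R (Fin n)))
      (Localization.AtPrime (originIdeal R (Fin n))) (d + n) := by
  obtain ⟨rs, hlen, hmem, hrs⟩ := hR
  have hM : ∀ f ∈ List.ofFn (X : Fin n → MvPolynomial (Fin n) R) ++ rs.map C,
      f ∈ originIdeal R (Fin n) := by
    intro f hf
    rcases List.mem_append.mp hf with hf | hf
    · obtain ⟨i, rfl⟩ := List.mem_ofFn.mp hf
      simp
    · obtain ⟨r, hr, rfl⟩ := List.mem_map.mp hf
      simpa using hmem r hr
  have hreg := (isWeaklyRegular_ofFn_X_append_map_C n hrs.toIsWeaklyRegular)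
    |>.isRegular_of_isLocalization_of_mem (Localization.AtPrime (originIdeal R (Fin n))) _ hM
  refine ⟨_, ?_, fun f hf ↦ ?_, hreg⟩
  · simp [hlen, add_comm]
  · obtain ⟨g, hg, rfl⟩ := List.mem_map.mp hf
    exact (IsLocalization.AtPrime.to_map_mem_maximal_iff _ (originIdeal R (Fin n)) g).mpr (hM g hg)

theorem le_height_originIdeal [IsNoetherianRing R] (n : ℕ) {d : ℕ} (hR : DepthAtLeast R R d) :
    ((d + n : ℕ) : ℕ∞) ≤ (originIdeal R (Fin n)).height := by
  rw [← WithBot.coe_le_coe, ← IsLocalization.AtPrime.ringKrullDim_eq_height (originIdeal R (Fin n))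
    (Localization.AtPrime (originIdeal R (Fin n)))]
  exact (depthAtLeast_localization_originIdeal n hR).le_ringKrullDim

end PolynomialRing

section GradedDescent

variable {R : Type*} [CommRing R] [IsLocalRing R] {σ : Type*}

attribute [local instance] MvPolynomial.gradedAlgebra

theorem mem_of_algebraMap_mem_map_localization_originIdeal {I : Ideal (MvPolynomial σ R)}
    (hI : I.IsHomogeneous (homogeneousSubmodule σ R)) {f : MvPolynomial σ R} {k : ℕ}
    (hf : f.IsHomogeneous k)
    (hfI : algebraMap _ (Localization.AtPrime (originIdeal R σ)) f ∈
      I.map (algebraMap _ (Localization.AtPrime (originIdeal R σ)))) : f ∈ I := by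
  obtain ⟨s, hs, hsf⟩ := (IsLocalization.algebraMap_mem_map_algebraMap_iff
    (originIdeal R σ).primeCompl _ _ _).mp hfI
  obtain ⟨u, hu⟩ : IsUnit (constantCoeff s) := by simpa [originIdeal] using hs
  have hcomp := hI.mem_iff.mp hsf (0 + k)
  rw [DirectSum.coe_decompose_mul_add_of_right_mem _ hf,
    show (DirectSum.decompose (homogeneousSubmodule σ R) s 0 : MvPolynomial σ R) = C (u : R) by
      rw [hu, constantCoeff_eq, ← homogeneousComponent_zero]
      exact decomposition.decompose'_apply s 0] at hcomp
  exact (Ideal.unit_mul_mem_iff_mem I (u.isUnit.map C)).mp hcomp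

theorem isWeaklyRegular_of_localization_originIdeal {fs : List (MvPolynomial σ R)}
    (hfs : ∀ f ∈ fs, ∃ k, f.IsHomogeneous k)
    (hreg : IsWeaklyRegular (Localization.AtPrime (originIdeal R σ))
      (fs.map (algebraMap _ (Localization.AtPrime (originIdeal R σ))))) :
    IsWeaklyRegular (MvPolynomial σ R) fs := by
  let A := Localization.AtPrime (originIdeal R σ)
  refine isWeaklyRegular_self_iff.mpr fun i hi f hf ↦ ?_
  obtain ⟨d, hd⟩ := hfs fs[i] (List.getElem_mem hi)
  have hI : (Ideal.ofList (fs.take i)).IsHomogeneous (homogeneousSubmodule σ R) :=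
    Ideal.homogeneous_span _ _ fun f hf ↦ hfs f (List.mem_of_mem_take hf)
  refine hI.mem_iff.mpr fun k ↦ ?_
  have hfk := hI.mem_iff.mp hf (d + k)
  rw [DirectSum.coe_decompose_mul_add_of_left_mem _ hd] at hfk
  refine mem_of_algebraMap_mem_map_localization_originIdeal hI
    ((mem_homogeneousSubmodule k _).mp (SetLike.coe_mem _)) ?_
  have hregi := isWeaklyRegular_self_iff.mp hreg i (by simpa using hi)
  rw [← List.map_take, ← Ideal.map_ofList, List.getElem_map] at hregi
  exact hregi _ (map_mul (algebraMap (MvPolynomial σ R) A) _ _ ▸ Ideal.mem_map_of_mem _ hfk)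

end GradedDescent

section LinearForms

variable {ι : Type*} [Fintype ι]

/-- The linear form `∑ j, a j * X j` with coefficient vector `a`, as a linear function of `a`. -/
def linearForm {ι : Type*} [Fintype ι] {R : Type*} [CommRing R] :
    (ι → R) →ₗ[R] MvPolynomial ι R :=
  Fintype.linearCombination R X

theorem isHomogeneous_linearForm {R : Type*} [CommRing R] (a : ι → R) :
    (linearForm a).IsHomogeneous 1 := by
  simp only [linearForm, Fintype.linearCombination_apply, smul_eq_C_mul]
  exact .sum _ _ _ fun j _ ↦ isHomogeneous_C_mul_X _ _

theorem map_linearForm {R S : Type*} [CommRing R] [CommRing S] (f : R →+* S) (a : ι → R) :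
    MvPolynomial.map f (linearForm a) = linearForm (f ∘ a) := by
  simp [linearForm, Fintype.linearCombination_apply, smul_eq_C_mul]

theorem linearForm_mem_originIdeal {R : Type*} [CommRing R] [IsLocalRing R] (a : ι → R) :
    linearForm a ∈ originIdeal R ι := by
  simp [linearForm, Fintype.linearCombination_apply, smul_eq_C_mul]

variable {K : Type*} [Field K]

/-- The map `K[X] → Sym(K^ι / W)` which sends the linear form of `v` to the class of `v`. Its target
is a domain, so its kernel, generated by the linear forms of `W`, is prime. -/
def linearFormQuotient (W : Submodule K (ι → K)) :
    MvPolynomial ι K →ₐ[K] SymmetricAlgebra K ((ι → K) ⧸ W) :=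
  open Classical in aeval fun j ↦ SymmetricAlgebra.ι K _ (W.mkQ (Pi.single j 1))

theorem linearFormQuotient_linearForm (W : Submodule K (ι → K)) (v : ι → K) :
    linearFormQuotient W (linearForm v) = SymmetricAlgebra.ι K _ (W.mkQ v) := by
  classical
  have : (linearFormQuotient W).toLinearMap ∘ₗ linearForm = SymmetricAlgebra.ι K _ ∘ₗ W.mkQ := by
    refine LinearMap.pi_ext' fun j ↦ LinearMap.ext_ring ?_
    simp [linearForm, linearFormQuotient, Fintype.linearCombination_apply_single]
  exact LinearMap.congr_fun this v

theorem ker_linearFormQuotient (W : Submodule K (ι → K)) :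
    RingHom.ker (linearFormQuotient W) = Ideal.span (linearForm '' (W : Set (ι → K))) := by
  classical
  refine le_antisymm (fun f hf ↦ ?_) (Ideal.span_le.mpr ?_)
  · let I := Ideal.span (linearForm '' (W : Set (ι → K)))
    let g : SymmetricAlgebra K ((ι → K) ⧸ W) →ₐ[K] MvPolynomial ι K ⧸ I :=
      SymmetricAlgebra.lift <| W.liftQ ((Ideal.Quotient.mkₐ K I).toLinearMap ∘ₗ linearForm)
        fun v hv ↦ Ideal.Quotient.eq_zero_iff_mem.mpr (Ideal.subset_span ⟨v, hv, rfl⟩)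
    have hg : g.comp (linearFormQuotient W) = Ideal.Quotient.mkₐ K I := by
      ext j
      simp [g, linearFormQuotient, linearForm, Fintype.linearCombination_apply_single]
    refine Ideal.Quotient.eq_zero_iff_mem.mp ?_
    rw [← Ideal.Quotient.mkₐ_eq_mk K, ← hg, AlgHom.comp_apply, hf, map_zero]
  · rintro _ ⟨v, hv, rfl⟩
    have hv0 : W.mkQ v = 0 := by simpa using hv
    exact (linearFormQuotient_linearForm W v).trans (by rw [hv0, map_zero])

instance isPrime_span_linearForm (W : Submodule K (ι → K)) :
    (Ideal.span (linearForm '' (W : Set (ι → K)))).IsPrime := by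
  rw [← ker_linearFormQuotient]
  exact RingHom.ker_isPrime _

theorem injective_symmetricAlgebra_ι (V : Type*) [AddCommGroup V] [Module K V] :
    Function.Injective (SymmetricAlgebra.ι K V) := by
  refine (injective_iff_map_eq_zero _).mpr fun v hv ↦
    (Module.forall_dual_apply_eq_zero_iff K v).mp fun f ↦ ?_
  rw [← SymmetricAlgebra.lift_ι_apply f v, hv, map_zero]

theorem linearForm_mem_span_linearForm_iff {W : Submodule K (ι → K)} {v : ι → K} :
    linearForm v ∈ Ideal.span (linearForm '' (W : Set (ι → K))) ↔ v ∈ W := by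
  rw [← ker_linearFormQuotient, RingHom.mem_ker, linearFormQuotient_linearForm,
    map_eq_zero_iff _ (injective_symmetricAlgebra_ι _),
    Submodule.mkQ_apply, Submodule.Quotient.mk_eq_zero]

variable {R : Type*} [CommRing R] (p : Ideal R) [p.IsPrime]

/-- The prime of `R[X]` lying over `p` which consists of the polynomials that vanish, over the
residue field of `p`, on the linear subspace cut out by the forms with coefficients in `W`. -/
def fiberPrime (W : Submodule p.ResidueField (ι → p.ResidueField)) : Ideal (MvPolynomial ι R) :=
  (Ideal.span (linearForm '' (W : Set (ι → p.ResidueField)))).comap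
    (MvPolynomial.map (algebraMap R p.ResidueField))

instance fiberPrime_isPrime (W : Submodule p.ResidueField (ι → p.ResidueField)) :
    (fiberPrime p W).IsPrime :=
  Ideal.comap_isPrime _ _

instance fiberPrime_liesOver (W : Submodule p.ResidueField (ι → p.ResidueField)) :
    (fiberPrime p W).LiesOver p := by
  refine ⟨Ideal.ext fun r ↦ ?_⟩
  rw [Ideal.mem_comap, fiberPrime, Ideal.mem_comap, algebraMap_eq, map_C,
    ← Ideal.algebraMap_residueField_eq_zero]
  refine ⟨fun h ↦ by simp [h], fun h ↦ by_contra fun hr ↦ ?_⟩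
  exact (isPrime_span_linearForm W).ne_top
    (Ideal.eq_top_of_isUnit_mem _ h ((IsUnit.mk0 _ hr).map C))

variable {p}

theorem fiberPrime_mono {W W' : Submodule p.ResidueField (ι → p.ResidueField)} (h : W ≤ W') :
    fiberPrime p W ≤ fiberPrime p W' :=
  Ideal.comap_mono (Ideal.span_mono (Set.image_mono h))

theorem linearForm_mem_fiberPrime_iff {W : Submodule p.ResidueField (ι → p.ResidueField)}
    {a : ι → R} : linearForm a ∈ fiberPrime p W ↔ algebraMap R p.ResidueField ∘ a ∈ W := by
  rw [fiberPrime, Ideal.mem_comap, map_linearForm, linearForm_mem_span_linearForm_iff]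

variable (p) in
/-- The span in `κ(p)^ι` of the residues of the vectors in `s`, where `κ(p)` is the residue field
of `p`. -/
def residueSpan (s : Set (ι → R)) : Submodule p.ResidueField (ι → p.ResidueField) :=
  Submodule.span p.ResidueField ((algebraMap R p.ResidueField ∘ ·) '' s)

theorem fiberPrime_residueSpan_le {s : Set (ι → R)} {Q : Ideal (MvPolynomial ι R)} [Q.IsPrime]
    [Q.LiesOver p] (hs : ∀ a ∈ s, linearForm a ∈ Q) : fiberPrime p (residueSpan p s) ≤ Q := by
  let φ : MvPolynomial ι p.ResidueField →+* Q.ResidueField :=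
    eval₂Hom (Ideal.ResidueField.map p Q C (Q.over_def p)) fun j ↦
      algebraMap (MvPolynomial ι R) Q.ResidueField (X j)
  have hφ (f : MvPolynomial ι R) :
      φ (MvPolynomial.map (algebraMap R p.ResidueField) f) = algebraMap _ _ f := by
    refine RingHom.congr_fun (f := φ.comp (MvPolynomial.map (algebraMap R p.ResidueField)))
      (MvPolynomial.ringHom_ext (fun r ↦ ?_) fun j ↦ ?_) f
    · simpa [φ] using Ideal.ResidueField.map_algebraMap p Q C (Q.over_def p) r
    · simp [φ]
  have hker : residueSpan p s ≤
      ((RingHom.ker φ).restrictScalars p.ResidueField).comap linearForm := by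
    refine Submodule.span_le.mpr ?_
    rintro _ ⟨a, ha, rfl⟩
    change φ (linearForm _) = 0
    rw [← map_linearForm, hφ]
    exact Ideal.algebraMap_residueField_eq_zero.mpr (hs a ha)
  intro f hf
  rw [← Ideal.algebraMap_residueField_eq_zero, ← hφ]
  exact (Ideal.span_le (I := RingHom.ker φ)).mpr (Set.image_subset_iff.mpr hker) hf

theorem height_add_finrank_residueSpan_le_height_fiberPrime [IsNoetherianRing R]
    {s : Set (ι → R)} (hs : s.Finite) :
    p.height + Module.finrank p.ResidueField (residueSpan p s) ≤
      (fiberPrime p (residueSpan p s)).height := by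
  induction s, hs using Set.Finite.induction_on with
  | empty =>
    rw [residueSpan, Set.image_empty, Submodule.span_empty, finrank_bot, Nat.cast_zero, add_zero,
      Ideal.height_eq_height_add_of_liesOver_of_hasGoingDown p (fiberPrime p ⊥)]
    exact le_self_add
  | @insert a s _ _ ih =>
    have hle : residueSpan p s ≤ residueSpan p (insert a s) :=
      Submodule.span_mono (Set.image_mono (Set.subset_insert a s))
    by_cases ha : algebraMap R p.ResidueField ∘ a ∈ residueSpan p s
    · have : residueSpan p (insert a s) = residueSpan p s := by
        rw [residueSpan, Set.image_insert_eq, Submodule.span_insert_eq_span ha, residueSpan]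
      rwa [this]
    · have hlt : fiberPrime p (residueSpan p s) < fiberPrime p (residueSpan p (insert a s)) := by
        refine (fiberPrime_mono hle).lt_of_ne fun h ↦ ha ?_
        rw [← linearForm_mem_fiberPrime_iff, h, linearForm_mem_fiberPrime_iff]
        exact Submodule.subset_span ⟨a, Set.mem_insert a s, rfl⟩
      have hfin : Module.finrank p.ResidueField (residueSpan p (insert a s)) =
          Module.finrank p.ResidueField (residueSpan p s) + 1 := by
        rw [residueSpan, Set.image_insert_eq, Submodule.span_insert, sup_comm]
        exact Submodule.finrank_sup_span_singleton ha
      calc p.height + Module.finrank p.ResidueField (residueSpan p (insert a s))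
        _ = p.height + Module.finrank p.ResidueField (residueSpan p s) + 1 := by
          rw [hfin, Nat.cast_add_one, add_assoc]
        _ ≤ (fiberPrime p (residueSpan p s)).height + 1 := by gcongr
        _ ≤ _ := Ideal.height_add_one_le_of_lt_of_isPrime hlt

theorem height_add_finrank_residueSpan_le_height [IsNoetherianRing R] {s : Set (ι → R)}
    (hs : s.Finite) {Q : Ideal (MvPolynomial ι R)} [Q.IsPrime] [Q.LiesOver p]
    (hsQ : ∀ a ∈ s, linearForm a ∈ Q) :
    p.height + Module.finrank p.ResidueField (residueSpan p s) ≤ Q.height :=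
  (height_add_finrank_residueSpan_le_height_fiberPrime hs).trans
    (Ideal.height_mono (fiberPrime_residueSpan_le hsQ))

end LinearForms

section FiberRank

variable {ι R : Type*} [CommRing R] {p : Ideal R} [p.IsPrime]

theorem residueSpan_union (s t : Set (ι → R)) :
    residueSpan p (s ∪ t) = residueSpan p s ⊔ residueSpan p t := by
  rw [residueSpan, Set.image_union, Submodule.span_union, residueSpan, residueSpan]

theorem residueSpan_span (s : Set (ι → R)) :
    residueSpan p (Submodule.span R s : Set (ι → R)) = residueSpan p s := by
  refine le_antisymm (Submodule.span_le.mpr (Set.image_subset_iff.mpr ?_))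
    (Submodule.span_mono (Set.image_mono Submodule.subset_span))
  let f : (ι → R) →ₗ[R] ι → p.ResidueField := (Algebra.linearMap R p.ResidueField).compLeft ι
  change Submodule.span R s ≤ ((residueSpan p s).restrictScalars R).comap f
  exact Submodule.span_le.mpr fun a ha ↦ Submodule.subset_span ⟨a, ha, rfl⟩

/-- An associated prime is the annihilator of some `x`, so a relation modulo `p` becomes a relation
over `R` after multiplication by `x`. -/
theorem linearIndependent_residueField_of_isAssociatedPrime [IsNoetherianRing R] {κ : Type*}
    [Finite κ] {w : κ → ι → R} (hw : LinearIndependent R w) (hp : IsAssociatedPrime p R) :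
    LinearIndependent p.ResidueField fun i ↦ algebraMap R p.ResidueField ∘ w i := by
  have := Fintype.ofFinite κ
  rw [← LinearIndependent.iff_fractionRing (R ⧸ p) p.ResidueField, Fintype.linearIndependent_iff]
  intro g hg
  choose a ha using fun i ↦ Ideal.Quotient.mk_surjective (g i)
  obtain ⟨-, x, hx⟩ := isAssociatedPrime_iff.mp hp
  have hx' (r : R) : r ∈ p ↔ r * x = 0 := by
    rw [hx, Submodule.mem_colon_singleton, smul_eq_mul, Submodule.mem_bot]
  have hsum : ∑ i, (a i * x) • w i = 0 := by
    funext j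
    have hj : ∑ i, a i * w i j ∈ p := by
      rw [← Ideal.Quotient.eq_zero_iff_mem, map_sum]
      simpa [Algebra.smul_def, ← ha, Ideal.algebraMap_residueField_eq_zero, ← map_mul, ← map_sum,
        Ideal.Quotient.eq_zero_iff_mem] using congrFun hg j
    rw [hx', Finset.sum_mul] at hj
    simpa [mul_right_comm] using hj
  intro i
  rw [← ha, Ideal.Quotient.eq_zero_iff_mem, hx']
  exact Fintype.linearIndependent_iff.mp hw _ hsum i

theorem finrank_residueSpan_range_of_isAssociatedPrime [IsNoetherianRing R] {κ : Type*} [Fintype κ]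
    {w : κ → ι → R} (hw : LinearIndependent R w) (hp : IsAssociatedPrime p R) :
    Module.finrank p.ResidueField (residueSpan p (Set.range w)) = Fintype.card κ := by
  rw [residueSpan, ← Set.range_comp]
  exact finrank_span_eq_card (linearIndependent_residueField_of_isAssociatedPrime hw hp)

theorem isAssociatedPrime_of_height_eq_zero [IsNoetherianRing R] (hp : p.height = 0) :
    IsAssociatedPrime p R := by
  refine Module.associatedPrimes.minimalPrimes_annihilator_subset_associatedPrimes R R ?_
  rw [Module.annihilator_eq_bot.mpr inferInstance]
  exact Ideal.height_eq_zero_iff.mp hp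

theorem exists_smul_mem_of_span_localizedModule_eq_top {M : Type*} [AddCommGroup M] [Module R M]
    {S : Submonoid R} {N : Submodule R M} {s : Set (LocalizedModule S M)}
    (hs : Submodule.span (Localization S) s = ⊤) (hsN : s ⊆ N.localized S) (m : M) :
    ∃ t : S, t • m ∈ N := by
  have hm : LocalizedModule.mkLinearMap S M m ∈ N.localized S :=
    (Submodule.span_le.mpr hsN) (hs ▸ Submodule.mem_top)
  obtain ⟨m', hm', t, ht⟩ := (Submodule.mem_localized' _ _ _ _ _).mp hm
  rw [IsLocalizedModule.mk'_eq_iff, Submonoid.smul_def, ← map_smul,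
    IsLocalizedModule.eq_iff_exists S] at ht
  obtain ⟨c, hc⟩ := ht
  refine ⟨c * t, ?_⟩
  rw [mul_smul]
  have : c • t • m = c • m' := hc.symm
  rw [this]
  exact N.smul_mem _ hm'

theorem residueSpan_ker_union_eq_top [Finite ι] {E : Type*} [AddCommGroup E] [Module R E]
    {π : (ι → R) →ₗ[R] E} {s : Set (LocalizedModule p.primeCompl E)}
    (hs : Submodule.span (Localization.AtPrime p) s = ⊤) {T : Set (ι → R)}
    (hT : ∀ x ∈ s, ∃ v ∈ T, ∃ t, x = LocalizedModule.mk (π v) t) :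
    residueSpan p (LinearMap.ker π ∪ T) = ⊤ := by
  classical
  set U := residueSpan p (LinearMap.ker π ∪ T)
  let f : (ι → R) →ₗ[R] ι → p.ResidueField := (Algebra.linearMap R p.ResidueField).compLeft ι
  let N : Submodule R (ι → R) := (U.restrictScalars R).comap f
  have hUN (u) (hu : u ∈ (LinearMap.ker π : Set (ι → R)) ∪ T) : u ∈ N :=
    Submodule.subset_span ⟨u, hu, rfl⟩
  have hsN : s ⊆ (N.map π).localized p.primeCompl := fun x hx ↦ by
    obtain ⟨v, hv, t, rfl⟩ := hT x hx
    exact (Submodule.mem_localized' _ _ _ _ _).mpr ⟨π v, ⟨v, hUN v (.inr hv), rfl⟩, t,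
      (IsLocalizedModule.mk_eq_mk' _ _).symm⟩
  refine eq_top_iff.mpr ((Pi.basisFun p.ResidueField ι).span_eq.ge.trans (Submodule.span_le.mpr ?_))
  rintro _ ⟨j, rfl⟩
  obtain ⟨c, hc⟩ := exists_smul_mem_of_span_localizedModule_eq_top hs hsN (π (Pi.single j 1))
  rw [Submonoid.smul_def, ← map_smul, ← Submodule.mem_comap, Submodule.comap_map_eq,
    sup_eq_left.mpr fun u hu ↦ hUN u (.inl hu)] at hc
  have hfc : f (c.1 • Pi.single j 1) =
      algebraMap R p.ResidueField c • Pi.basisFun p.ResidueField ι j := by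
    ext i
    obtain rfl | hij := eq_or_ne i j <;> simp [f, *]
  have hc0 : algebraMap R p.ResidueField c ≠ 0 :=
    Ideal.algebraMap_residueField_eq_zero.not.mpr c.2
  exact (U.smul_mem_iff hc0).mp (hfc ▸ hc)

theorem card_le_finrank_residueSpan_ker_add_card [Fintype ι] {E : Type*} [AddCommGroup E]
    [Module R E] {π : (ι → R) →ₗ[R] E} (hπ : Function.Surjective π)
    {s : Finset (LocalizedModule p.primeCompl E)}
    (hs : Submodule.span (Localization.AtPrime p) (s : Set (LocalizedModule p.primeCompl E)) = ⊤) :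
    Fintype.card ι ≤
      Module.finrank p.ResidueField (residueSpan p (LinearMap.ker π : Set (ι → R))) + s.card := by
  classical
  have hlift (x : LocalizedModule p.primeCompl E) :
      ∃ v : ι → R, ∃ t, x = LocalizedModule.mk (π v) t := by
    induction x using LocalizedModule.induction_on with
    | _ m t => exact (hπ m).imp fun v hv ↦ ⟨t, by rw [hv]⟩
  choose v hv using hlift
  have htop : residueSpan p (LinearMap.ker π ∪ v '' s) = ⊤ :=
    residueSpan_ker_union_eq_top hs fun x hx ↦ ⟨v x, ⟨x, hx, rfl⟩, hv x⟩
  have hle : Module.finrank p.ResidueField (residueSpan p (v '' s)) ≤ s.card := by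
    rw [residueSpan, Set.image_image, ← Finset.coe_image]
    exact (finrank_span_finset_le_card _).trans Finset.card_image_le
  have hsup := Submodule.finrank_add_le_finrank_add_finrank
    (residueSpan p (LinearMap.ker π : Set (ι → R))) (residueSpan p (v '' s))
  rw [← residueSpan_union, htop, finrank_top, Module.finrank_pi] at hsup
  exact hsup.trans (by gcongr)

end FiberRank

section LinearIdeal

variable {R : Type*} [CommRing R] [IsNoetherianRing R]

theorem le_height_span_linearForm {ι κ : Type*} [Fintype ι] [Finite κ] {w : κ → ι → R} {k : ℕ∞}
    (hw : ∀ (p : Ideal R) [p.IsPrime],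
      k ≤ p.height + Module.finrank p.ResidueField (residueSpan p (Set.range w))) :
    k ≤ (Ideal.span (Set.range fun i ↦ linearForm (w i))).height := by
  rw [Ideal.height_eq_inf_minimalPrimes]
  refine le_iInf₂ fun Q hQ ↦ ?_
  have := hQ.isPrime
  refine (hw (Q.under R)).trans
    (height_add_finrank_residueSpan_le_height (Set.finite_range w) ?_)
  rintro _ ⟨i, rfl⟩
  exact hQ.le (Ideal.subset_span ⟨i, rfl⟩)

theorem ringKrullDim_mvPolynomial_fin {d n : ℕ} (hdim : ringKrullDim R = d) :
    ringKrullDim (MvPolynomial (Fin n) R) = (d + n : ℕ) := by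
  rw [ringKrullDim_of_isNoetherianRing, hdim, Nat.card_eq_fintype_card, Fintype.card_fin,
    Nat.cast_add]

variable [IsLocalRing R]

theorem le_ringKrullDim_quotient_span_linearForm {d n k m : ℕ} (hm : m + k = d + n)
    (hdepth : DepthAtLeast R R d) (w : Fin k → Fin n → R) :
    m ≤ ringKrullDim (MvPolynomial (Fin n) R ⧸
      Ideal.span (Set.range fun i ↦ linearForm (w i))) := by
  have hle := (WithBot.coe_le_coe.mpr (le_height_originIdeal n hdepth)).trans
    (Ideal.height_le_ringKrullDim_quotient_add_encard (Set.range fun i ↦ linearForm (w i))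
      (Set.range_subset_iff.mpr fun i ↦ linearForm_mem_originIdeal (w i)))
  have hcard : (Set.range fun i ↦ linearForm (w i)).encard ≤ k := by
    rw [← Set.image_univ]
    exact (Set.encard_image_le _ _).trans (by simp)
  rw [← hm] at hle
  refine (ENat.WithBot.add_le_add_natCast_right_iff (c := k)).mp ?_
  calc (m : WithBot ℕ∞) + k = (m + k : ℕ) := (Nat.cast_add m k).symm
    _ ≤ _ := hle
    _ ≤ _ := by gcongr; exact WithBot.coe_le_coe.mpr hcard

theorem isRegular_ofFn_linearForm {d n k m : ℕ} (hm : m + k = d + n) (hdim : ringKrullDim R = d)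
    (hdepth : DepthAtLeast R R d) {w : Fin k → Fin n → R}
    (hheight : k ≤ (Ideal.span (Set.range fun i ↦ linearForm (w i))).height) :
    IsRegular (MvPolynomial (Fin n) R) (List.ofFn fun i ↦ linearForm (w i)) := by
  let fs := List.ofFn fun i ↦ linearForm (w i)
  let A := Localization.AtPrime (originIdeal R (Fin n))
  let gs := fs.map (algebraMap (MvPolynomial (Fin n) R) A)
  have hfs : Ideal.ofList fs = Ideal.span (Set.range fun i ↦ linearForm (w i)) :=
    congrArg Ideal.span (Set.ext fun f ↦ List.mem_ofFn)
  have hlen : gs.length = k := by simp [gs, fs]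
  have hmem (f) (hf : f ∈ fs) : f ∈ originIdeal R (Fin n) := by
    obtain ⟨i, rfl⟩ := List.mem_ofFn.mp hf
    exact linearForm_mem_originIdeal _
  have hA : IsWeaklyRegular A gs := by
    refine isWeaklyRegular_of_length_le_height (m := m) ?_ ?_ ?_ ?_
    · rw [hlen, hm]
      exact depthAtLeast_localization_originIdeal n hdepth
    · refine List.forall_mem_map.mpr fun f hf ↦ ?_
      exact (IsLocalization.AtPrime.to_map_mem_maximal_iff _ _ f).mpr (hmem f hf)
    · rw [hlen, hm, ← ringKrullDim_mvPolynomial_fin hdim]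
      rw [IsLocalization.AtPrime.ringKrullDim_eq_height (originIdeal R (Fin n)) A]
      exact Ideal.height_le_ringKrullDim_of_ne_top Ideal.IsPrime.ne_top'
    · rw [hlen, ← Ideal.map_ofList, hfs]
      exact (hheight.trans (Ideal.height_mono Ideal.le_comap_map)).trans
        (IsLocalization.height_under (originIdeal R (Fin n)).primeCompl _).le
  refine ⟨isWeaklyRegular_of_localization_originIdeal (fun f hf ↦ ?_) hA, fun h ↦ ?_⟩
  · obtain ⟨i, rfl⟩ := List.mem_ofFn.mp hf
    exact ⟨1, isHomogeneous_linearForm _⟩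
  · rw [smul_eq_mul, Ideal.mul_top] at h
    exact (inferInstance : (originIdeal R (Fin n)).IsPrime).ne_top
      (top_le_iff.mp (h.le.trans (Ideal.span_le.mpr hmem)))

end LinearIdeal

section Resolution

variable {R : Type u} [CommRing R] [IsNoetherianRing R]
  {E : Type v} [AddCommGroup E] [Module R E]

theorem card_le_height_add_finrank_residueSpan_col {k e : ℕ}
    {φ : Matrix (Fin (k + e)) (Fin k) R} (hinj : Function.Injective φ.mulVecLin)
    {π : (Fin (k + e) → R) →ₗ[R] E} (hsurj : Function.Surjective π)
    (hker : LinearMap.ker π = LinearMap.range φ.mulVecLin) (p : Ideal R) [p.IsPrime]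
    (hp : ∀ c : ℕ, p.height = c → 1 ≤ c → c < k →
      ∃ s : Finset (LocalizedModule p.primeCompl E), s.card ≤ c + e ∧
        Submodule.span (Localization.AtPrime p)
          (s : Set (LocalizedModule p.primeCompl E)) = ⊤) :
    k ≤ p.height + Module.finrank p.ResidueField (residueSpan p (Set.range φ.col)) := by
  obtain ⟨c, hc⟩ := ENat.ne_top_iff_exists.mp (p.height_ne_top Ideal.IsPrime.ne_top')
  rcases Nat.eq_zero_or_pos c with rfl | hc0
  · rw [finrank_residueSpan_range_of_isAssociatedPrime (Matrix.mulVec_injective_iff.mp hinj)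
      (isAssociatedPrime_of_height_eq_zero hc.symm), Fintype.card_fin]
    exact le_add_self
  rcases le_or_gt k c with hkc | hck
  · rw [← hc]
    exact le_add_right (Nat.cast_le.mpr hkc)
  obtain ⟨s, hs, hspan⟩ := hp c hc.symm hc0 hck
  have hrank := card_le_finrank_residueSpan_ker_add_card hsurj hspan
  rw [hker, Matrix.range_mulVecLin, residueSpan_span, Fintype.card_fin] at hrank
  rw [← hc, ← Nat.cast_add, Nat.cast_le]
  lia

/-- The condition `hE` is `F₀`, namely `μ(E_p) ≤ dim R_p + e`; its bound exceeds that of `G_k` by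
one. -/
theorem symmetric_algebra_complete_intersection_general [IsLocalRing R] {d k e : ℕ}
    (hdim : ringKrullDim R = d) (hdepth : DepthAtLeast R R d)
    (φ : Matrix (Fin (k + e)) (Fin k) R) (hinj : Function.Injective φ.mulVecLin)
    (π : (Fin (k + e) → R) →ₗ[R] E) (hsurj : Function.Surjective π)
    (hker : LinearMap.ker π = LinearMap.range φ.mulVecLin)
    (hE : ∀ (p : Ideal R) [p.IsPrime] (c : ℕ), p.height = c → 1 ≤ c → c < k →
      ∃ s : Finset (LocalizedModule p.primeCompl E), s.card ≤ c + e ∧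
        Submodule.span (Localization.AtPrime p)
          (s : Set (LocalizedModule p.primeCompl E)) = ⊤) :
    ringKrullDim (MvPolynomial (Fin (k + e)) R ⧸
      Ideal.span (Set.range fun i ↦ linearForm (φ.col i))) = (d + e : ℕ) ∧
    IsRegular (MvPolynomial (Fin (k + e)) R) (List.ofFn fun i ↦ linearForm (φ.col i)) := by
  have hheight : k ≤ (Ideal.span (Set.range fun i ↦ linearForm (φ.col i))).height :=
    le_height_span_linearForm fun p _ ↦
      card_le_height_add_finrank_residueSpan_col hinj hsurj hker p (hE p)
  have hm : d + e + k = d + (k + e) := by lia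
  have hdimB : ringKrullDim (MvPolynomial (Fin (k + e)) R) ≤ (d + e + k : ℕ) :=
    hm ▸ (ringKrullDim_mvPolynomial_fin hdim).le
  exact ⟨(ringKrullDim_quotient_le_of_le_height hheight hdimB).antisymm
    (le_ringKrullDim_quotient_span_linearForm hm hdepth φ.col),
    isRegular_ofFn_linearForm hm hdim hdepth hheight⟩

end Resolution

theorem symmetric_algebra_complete_intersection
    (R : Type) [CommRing R] [IsNoetherianRing R] [IsLocalRing R]
    (d : ℕ) (hdim : ringKrullDim R = (d : WithBot ℕ∞))
    -- `R` is Cohen–Macaulay: its depth equals its dimension `d`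
    (hCM : ∃ rs : List R, rs.length = d ∧ (∀ r ∈ rs, r ∈ IsLocalRing.maximalIdeal R) ∧
      RingTheory.Sequence.IsRegular R rs)
    (E : Type) [AddCommGroup E] [Module R E] [Module.Finite R E]
    -- `E` is torsion-free
    (htf : Submodule.torsion R E = ⊥)
    (e : ℕ) (he : 1 ≤ e)
    -- `0 → R^d →φ R^{d+e} →π E → 0` is a minimal free resolution (so `pd E = 1`,
    -- `rank E = e`, and `μ(E) = d+e`)
    (φ : Matrix (Fin (d + e)) (Fin d) R)
    (hinj : Function.Injective φ.mulVecLin)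
    (π : (Fin (d + e) → R) →ₗ[R] E) (hsurj : Function.Surjective π)
    (hker : LinearMap.ker π = LinearMap.range φ.mulVecLin)
    (hmin : ∀ i j, φ i j ∈ IsLocalRing.maximalIdeal R)
    (hμ : ∀ s : Finset E, Submodule.span R (s : Set E) = ⊤ → d + e ≤ s.card)
    -- `E` satisfies `G_d`: `μ(E_p) ≤ dim R_p + e − 1` whenever `1 ≤ dim R_p ≤ d−1`
    (hGd : ∀ (p : Ideal R) (_ : p.IsPrime) (c : ℕ),
      ringKrullDim (Localization.AtPrime p) = (c : WithBot ℕ∞) → 1 ≤ c → c ≤ d - 1 →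
      ∃ s : Finset (LocalizedModule p.primeCompl E), s.card ≤ c + e - 1 ∧
        Submodule.span (Localization.AtPrime p)
          (s : Set (LocalizedModule p.primeCompl E)) = ⊤)
    -- the linear forms `ℓ_i = Σ_j φ_{j i} y_j` defining the symmetric algebra
    (ℓ : Fin d → MvPolynomial (Fin (d + e)) R)
    (hℓ : ∀ i, ℓ i = ∑ j, C (φ j i) * X j)
    (L : Ideal (MvPolynomial (Fin (d + e)) R)) (hL : L = Ideal.span (Set.range ℓ)) :
    ringKrullDim (MvPolynomial (Fin (d + e)) R ⧸ L) = ((d + e : ℕ) : WithBot ℕ∞) ∧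
    RingTheory.Sequence.IsRegular (MvPolynomial (Fin (d + e)) R) (List.ofFn ℓ) := by
  have hform : ℓ = fun i ↦ linearForm (φ.col i) := funext fun i ↦ by
    simp [hℓ, linearForm, Fintype.linearCombination_apply, smul_eq_C_mul]
  subst hL hform
  refine symmetric_algebra_complete_intersection_general hdim hCM φ hinj π hsurj hker
    fun p hp c hc hc1 hcd ↦ ?_
  obtain ⟨s, hs, hspan⟩ := hGd p hp c
    (by rw [IsLocalization.AtPrime.ringKrullDim_eq_height p, hc]; rfl) hc1 (by lia)
  exact ⟨s, by lia, hspan⟩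

end Stmt5
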